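/- There exists a constant C > 0 such that for every n ≥ 2 there is a natural number m ≤ C·n^{log₂(15)/4} and a symmetric function G : {0,1}^m × {0,1}^m → {0,1} with the property: for every tuple of points p_1, …, p_n ∈ ℝ² there exists F : {1,…,n} → {0,1}^m such that for all i ≠ j, G(F(i), F(j)) = 1 if and only if the Euclidean distance from p_i to p_j is at most 2. (Note log₂(15)/4 ≈ 0.976723 < 1.) -/

import Mathlib

/-! Lifting a ball with center `p` and radius `r` to the vector `(1, r, p, r² - ‖p‖²)` turns
intersection into a linear condition, so the neighbourhoods in a graph of balls have VC dimension
at most `d = dim E + 3`. By Sauer–Shelah and a greedy hitting set for the pairwise symmetric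
differences, among `k` neighbourhoods two differ on a fraction `O(k^(-1/d) log k)` of the total
weight, whatever the weights of the vertices. Welzl's reweighting argument then orders the vertices
so that every row of the adjacency matrix changes value only `O(n^(1-1/d) log² n)` times. A vertex
is labelled by its position in this order and the positions where its row changes; the parity of the
changes up to the position of another vertex is the adjacency bit. In the plane,
`1 - 1/d = 4/5 < log₂(15)/4`. -/

section

open Finset Module
open scoped symmDiff

section ShatterBounds

variable {α : Type*}

theorem card_filter_powerset_card_le_le_pow (T : Finset α) (d : ℕ) :
    #{U ∈ T.powerset | #U ≤ d} ≤ (#T + 1) ^ d := by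
  classical
  have hcover : {U ∈ T.powerset | #U ≤ d} ⊆ (range (d + 1)).biUnion (T.powersetCard ·) := by
    intro U hU
    rw [mem_filter, mem_powerset] at hU
    exact mem_biUnion.2 ⟨#U, mem_range.2 (by omega), mem_powersetCard.2 ⟨hU.1, rfl⟩⟩
  calc #{U ∈ T.powerset | #U ≤ d}
      ≤ ∑ k ∈ range (d + 1), #(T.powersetCard k) := (card_le_card hcover).trans card_biUnion_le
    _ ≤ ∑ k ∈ range (d + 1), #T ^ k * 1 ^ (d - k) * d.choose k := by
        refine sum_le_sum fun k hk ↦ ?_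
        rw [card_powersetCard, one_pow, mul_one]
        have hchoose : 0 < d.choose k := Nat.choose_pos (by have := mem_range.1 hk; omega)
        exact (Nat.choose_le_pow _ _).trans (Nat.le_mul_of_pos_right _ hchoose)
    _ = (#T + 1) ^ d := (add_pow _ _ _).symm

variable [DecidableEq α]

theorem card_image_inter_le_of_vcDim_le {𝒜 : Finset (Finset α)} {d : ℕ} (hd : 𝒜.vcDim ≤ d)
    (T : Finset α) : #(𝒜.image (T ∩ ·)) ≤ (#T + 1) ^ d := by
  have hsub : (𝒜.image (T ∩ ·)).shatterer ⊆ {U ∈ T.powerset | #U ≤ d} := by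
    intro U hU
    rw [mem_shatterer] at hU
    have hUT : U ⊆ T := by
      obtain ⟨_, htrace, hUA⟩ := hU.exists_superset
      obtain ⟨A, -, rfl⟩ := mem_image.1 htrace
      exact hUA.trans inter_subset_left
    have hshatters : 𝒜.Shatters U := by
      intro V hVU
      obtain ⟨_, htrace, hUA⟩ := hU hVU
      obtain ⟨A, hA, rfl⟩ := mem_image.1 htrace
      exact ⟨A, hA, by rwa [← inter_assoc, inter_eq_left.2 hUT] at hUA⟩
    exact mem_filter.2 ⟨mem_powerset.2 hUT, hshatters.card_le_vcDim.trans hd⟩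
  exact (card_le_card_shatterer _).trans <|
    (card_le_card hsub).trans (card_filter_powerset_card_le_le_pow T d)

/-- A linear dependence `∑ f a • Φ a = 0` on a shattered set, tested against the functional that
cuts out exactly the points with `f a > 0`, has only nonnegative terms; hence `f ≥ 0`, and
likewise `-f ≥ 0`. -/
theorem vcDim_le_finrank_of_halfspaces {𝕜 M : Type*} [Field 𝕜] [LinearOrder 𝕜]
    [IsStrictOrderedRing 𝕜] [AddCommGroup M] [Module 𝕜 M] [Module.Finite 𝕜 M] (Φ : α → M)
    {𝒜 : Finset (Finset α)}
    (h𝒜 : ∀ A ∈ 𝒜, ∃ ℓ : Module.Dual 𝕜 M, ∀ a, a ∈ A ↔ 0 ≤ ℓ (Φ a)) :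
    𝒜.vcDim ≤ finrank 𝕜 M := by
  refine Finset.sup_le fun U hU ↦ ?_
  rw [mem_shatterer] at hU
  have hnonneg : ∀ f : α → 𝕜, ∑ a ∈ U, f a • Φ a = 0 → ∀ a ∈ U, 0 ≤ f a := by
    intro f hf
    obtain ⟨A, hA, hUA⟩ := hU (filter_subset (fun a ↦ 0 < f a) U)
    obtain ⟨ℓ, hℓ⟩ := h𝒜 A hA
    have hsign : ∀ a ∈ U, (0 ≤ ℓ (Φ a) ↔ 0 < f a) := fun a ha ↦ by
      rw [← hℓ, ← and_iff_right (a := a ∈ U) (b := a ∈ A) ha, ← mem_inter, hUA, mem_filter,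
        and_iff_right ha]
    have hneg : ∀ a ∈ U, f a ≤ 0 → ℓ (Φ a) < 0 := fun a ha hfa ↦
      not_le.1 fun h ↦ hfa.not_gt ((hsign a ha).1 h)
    have hterm : ∀ a ∈ U, 0 ≤ f a * ℓ (Φ a) := fun a ha ↦ by
      rcases lt_or_ge 0 (f a) with hpos | hnonpos
      · exact mul_nonneg hpos.le ((hsign a ha).2 hpos)
      · exact mul_nonneg_of_nonpos_of_nonpos hnonpos (hneg a ha hnonpos).le
    have hsum : ∑ a ∈ U, f a * ℓ (Φ a) = 0 := by
      simpa only [map_sum, map_smul, smul_eq_mul, map_zero] using congrArg ℓ hf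
    intro a ha
    by_contra! hfa
    exact (mul_pos_of_neg_of_neg hfa (hneg a ha hfa.le)).ne'
      ((sum_eq_zero_iff_of_nonneg hterm).1 hsum a ha)
  have hindep : LinearIndepOn 𝕜 Φ (U : Set α) := by
    refine linearIndepOn_finset_iff.2 fun f hf a ha ↦ (hnonneg f hf a ha).antisymm' ?_
    have hsum : ∑ a ∈ U, (-f a) • Φ a = 0 := by
      simp only [neg_smul, sum_neg_distrib, hf, neg_zero]
    exact neg_nonneg.1 (hnonneg _ hsum a ha)
  simpa using hindep.linearIndependent.fintype_card_le_finrank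

end ShatterBounds

section HittingSets

variable {α κ : Type*} [Fintype α] {P : Finset κ} {D : κ → Finset α} {w : α → ℝ}
  {δ : ℝ}

theorem exists_mul_card_lt_card_filter_mem [DecidableEq α] (hP : P.Nonempty) (hw : ∀ a, 0 < w a)
    (hδ : ∀ q ∈ P, δ * ∑ a, w a < ∑ a ∈ D q, w a) : ∃ a, δ * #P < #{q ∈ P | a ∈ D q} := by
  have hdouble : ∑ a, w a * (δ * #P) < ∑ a, w a * #{q ∈ P | a ∈ D q} :=
    calc ∑ a, w a * (δ * #P) = ∑ _ ∈ P, δ * ∑ a, w a := by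
          rw [← sum_mul, sum_const, nsmul_eq_mul]
          ring
      _ < ∑ q ∈ P, ∑ a ∈ D q, w a := sum_lt_sum_of_nonempty hP hδ
      _ = ∑ q ∈ P, ∑ a, if a ∈ D q then w a else 0 := by simp only [sum_ite_mem, univ_inter]
      _ = ∑ a, w a * #{q ∈ P | a ∈ D q} := by
          rw [sum_comm]
          refine sum_congr rfl fun a _ ↦ ?_
          rw [← sum_filter, sum_const, nsmul_eq_mul, mul_comm]
  obtain ⟨a, -, ha⟩ := exists_lt_of_sum_lt hdouble
  exact ⟨a, lt_of_mul_lt_mul_left ha (hw a).le⟩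

theorem exists_card_filter_disjoint_le [DecidableEq α] (hw : ∀ a, 0 < w a)
    (hδ : ∀ q ∈ P, δ * ∑ a, w a < ∑ a ∈ D q, w a) (s : ℕ) :
    ∃ T : Finset α, #T ≤ s ∧ (#{q ∈ P | Disjoint T (D q)} : ℝ) ≤ Real.exp (-(δ * s)) * #P := by
  induction s with
  | zero => exact ⟨∅, by simp, by simp⟩
  | succ s ih =>
    obtain ⟨T, hTs, hT⟩ := ih
    set U := {q ∈ P | Disjoint T (D q)} with hU
    rcases U.eq_empty_or_nonempty with hempty | hne
    · refine ⟨T, by omega, ?_⟩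
      rw [← hU, hempty, card_empty, Nat.cast_zero]
      positivity
    obtain ⟨a, ha⟩ := exists_mul_card_lt_card_filter_mem hne hw
      fun q hq ↦ hδ q (mem_filter.1 hq).1
    refine ⟨insert a T, (card_insert_le _ _).trans (by omega), ?_⟩
    have hinsert : {q ∈ P | Disjoint (insert a T) (D q)} = {q ∈ U | a ∉ D q} := by
      simp only [hU, filter_filter, disjoint_insert_left, and_comm]
    have hsplit : (#{q ∈ U | a ∈ D q} : ℝ) + #{q ∈ U | a ∉ D q} = #U := by
      exact_mod_cast card_filter_add_card_filter_not (s := U) (a ∈ D ·)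
    calc (#{q ∈ P | Disjoint (insert a T) (D q)} : ℝ) ≤ (1 - δ) * #U := by
          rw [hinsert]
          linarith
      _ ≤ Real.exp (-δ) * (Real.exp (-(δ * s)) * #P) := by
          gcongr
          exact Real.one_sub_le_exp_neg δ
      _ = Real.exp (-(δ * (s + 1 : ℕ))) * #P := by
          rw [← mul_assoc, ← Real.exp_add]
          push_cast
          ring_nf

theorem exists_forall_not_disjoint (hw : ∀ a, 0 < w a)
    (hδ : ∀ q ∈ P, δ * ∑ a, w a < ∑ a ∈ D q, w a) {s : ℕ} (hs : (#P : ℝ) < Real.exp (δ * s)) :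
    ∃ T : Finset α, #T ≤ s ∧ ∀ q ∈ P, ¬Disjoint T (D q) := by
  classical
  obtain ⟨T, hTs, hT⟩ := exists_card_filter_disjoint_le hw hδ s
  have hlt : (#{q ∈ P | Disjoint T (D q)} : ℝ) < 1 :=
    calc (#{q ∈ P | Disjoint T (D q)} : ℝ) ≤ Real.exp (-(δ * s)) * #P := hT
      _ < Real.exp (-(δ * s)) * Real.exp (δ * s) := by gcongr
      _ = 1 := by rw [← Real.exp_add, neg_add_cancel, Real.exp_zero]
  have hzero : #{q ∈ P | Disjoint T (D q)} = 0 := Nat.lt_one_iff.1 (by exact_mod_cast hlt)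
  exact ⟨T, hTs, filter_eq_empty_iff.1 (card_eq_zero.1 hzero)⟩

end HittingSets

section Packing

variable {α ι : Type*} [DecidableEq α] {N : ι → Finset α} {S : Finset ι} {d : ℕ}

theorem card_le_of_forall_not_disjoint_symmDiff (hd : (S.image N).vcDim ≤ d) {T : Finset α}
    (hT : ∀ q ∈ S.offDiag, ¬Disjoint T (N q.1 ∆ N q.2)) : #S ≤ (#T + 1) ^ d := by
  have hinj : Set.InjOn (fun x ↦ T ∩ N x) S := by
    intro x hx y hy hxy
    by_contra hne
    refine hT (x, y) (mem_offDiag.2 ⟨hx, hy, hne⟩) ?_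
    rw [disjoint_iff, inf_symmDiff_distrib_left]
    exact symmDiff_eq_bot.2 hxy
  calc #S = #((S.image N).image (T ∩ ·)) := by
        rw [image_image, ← card_image_of_injOn hinj, Function.comp_def]
    _ ≤ (#T + 1) ^ d := card_image_inter_le_of_vcDim_le hd T

variable [Fintype α] {w : α → ℝ} {δ : ℝ}

theorem card_le_ceil_add_one_pow_of_separated (hd : (S.image N).vcDim ≤ d) (hS : S.Nonempty)
    (hw : ∀ a, 0 < w a) (hδ : 0 < δ)
    (hsep : ∀ x ∈ S, ∀ y ∈ S, x ≠ y → δ * ∑ a, w a < ∑ a ∈ N x ∆ N y, w a) :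
    #S ≤ (⌈2 * Real.log #S / δ⌉₊ + 1) ^ d := by
  have hS0 : 0 < #S := hS.card_pos
  have hpairs : (#S.offDiag : ℝ) < Real.exp (δ * ⌈2 * Real.log #S / δ⌉₊) :=
    calc (#S.offDiag : ℝ) < (#S : ℝ) ^ 2 := by
          rw [offDiag_card, sq]
          exact_mod_cast Nat.sub_lt (by positivity) hS0
      _ = Real.exp (2 * Real.log #S) := by
          rw [two_mul, Real.exp_add, Real.exp_log (by exact_mod_cast hS0), sq]
      _ ≤ Real.exp (δ * ⌈2 * Real.log #S / δ⌉₊) := by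
          rw [Real.exp_le_exp, ← div_le_iff₀' hδ]
          exact Nat.le_ceil _
  obtain ⟨T, hTs, hT⟩ := exists_forall_not_disjoint (P := S.offDiag)
    (D := fun q ↦ N q.1 ∆ N q.2) hw (fun q hq ↦ by
      obtain ⟨hx, hy, hxy⟩ := mem_offDiag.1 hq
      exact hsep _ hx _ hy hxy) hpairs
  exact (card_le_of_forall_not_disjoint_symmDiff hd hT).trans (by gcongr)

theorem mul_rpow_card_lt_of_separated (hd : (S.image N).vcDim ≤ d) (hd0 : d ≠ 0)
    (hS : 2 ≤ #S) (hw : ∀ a, 0 < w a) (hδ : 0 < δ)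
    (hsep : ∀ x ∈ S, ∀ y ∈ S, x ≠ y → δ * ∑ a, w a < ∑ a ∈ N x ∆ N y, w a) :
    δ * (#S : ℝ) ^ (1 / d : ℝ) < 2 * (1 + Real.log #S) := by
  have hδ1 : δ < 1 := by
    obtain ⟨x, hx, y, hy, hxy⟩ := one_lt_card.1 hS
    have htotal : ∑ a ∈ N x ∆ N y, w a ≤ ∑ a, w a :=
      sum_le_univ_sum_of_nonneg fun a ↦ (hw a).le
    have hsum : 0 ≤ ∑ a, w a := sum_nonneg fun a _ ↦ (hw a).le
    nlinarith [hsep x hx y hy hxy]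
  set s := ⌈2 * Real.log #S / δ⌉₊
  have hcard : (#S : ℝ) ≤ ((s : ℝ) + 1) ^ d := by
    exact_mod_cast card_le_ceil_add_one_pow_of_separated hd (card_pos.1 (by omega)) hw hδ hsep
  have hroot : (#S : ℝ) ^ (1 / d : ℝ) ≤ s + 1 := by
    rw [one_div]
    exact Real.rpow_inv_le_iff_of_pos (by positivity) (by positivity) (by positivity) |>.2
      (by rwa [Real.rpow_natCast])
  calc δ * (#S : ℝ) ^ (1 / d : ℝ) ≤ δ * (s + 1) := by gcongr
    _ < δ * (2 * Real.log #S / δ + 1 + 1) := by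
        gcongr
        exact Nat.ceil_lt_add_one (by positivity)
    _ = 2 * Real.log #S + 2 * δ := by field_simp; ring
    _ < 2 * (1 + Real.log #S) := by linarith

theorem exists_ne_sum_symmDiff_le (hd : (S.image N).vcDim ≤ d) (hd0 : d ≠ 0) (hS : 2 ≤ #S)
    (hw : ∀ a, 0 < w a) :
    ∃ x ∈ S, ∃ y ∈ S, x ≠ y ∧ ∑ a ∈ N x ∆ N y, w a ≤
      2 * (1 + Real.log #S) * (#S : ℝ) ^ (-(1 / d) : ℝ) * ∑ a, w a := by
  have hS0 : (0 : ℝ) < #S := by exact_mod_cast (by omega : 0 < #S)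
  by_contra! hsep
  have hlt := mul_rpow_card_lt_of_separated hd hd0 hS hw (by positivity) hsep
  rw [mul_assoc, ← Real.rpow_add hS0, neg_add_cancel, Real.rpow_zero, mul_one] at hlt
  exact lt_irrefl _ hlt

end Packing

section FlipPositions

/-- The positions at which the word `l`, read after the letter `a`, differs from the preceding
letter. -/
def flips (a : Bool) (l : List Bool) : Finset ℕ :=
  {j ∈ range l.length | (a :: l).getD j false ≠ l.getD j false}

theorem flips_subset_range (a : Bool) (l : List Bool) : flips a l ⊆ range l.length :=
  filter_subset _ _

theorem card_flips_nil (a : Bool) : #(flips a []) = 0 := rfl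

theorem card_flips_cons (a b : Bool) (l : List Bool) :
    #(flips a (b :: l)) = #(flips b l) + if a = b then 0 else 1 := by
  simp only [flips, card_filter, List.length_cons, sum_range_succ', List.getD_cons_succ,
    List.getD_cons_zero, ne_eq, ite_not]

theorem card_flips_insert_le (y x : Bool) (l₁ l₂ : List Bool) (a : Bool) :
    #(flips a (l₁ ++ y :: x :: l₂)) ≤
      #(flips a (l₁ ++ y :: l₂)) + 2 * if x = y then 0 else 1 := by
  induction l₁ generalizing a with
  | nil =>
    cases l₂ with
    | nil =>
      simp only [List.nil_append, card_flips_cons, card_flips_nil]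
      cases x <;> cases y <;> simp <;> omega
    | cons b l =>
      simp only [List.nil_append, card_flips_cons]
      cases x <;> cases y <;> cases b <;> simp <;> omega
  | cons b l₁ ih =>
    simp only [List.cons_append, card_flips_cons]
    have := ih b
    omega

theorem getD_eq_true_iff_odd_card_flips {l : List Bool} {i : ℕ} (hi : i < l.length) :
    l.getD i false = true ↔ Odd #{j ∈ flips false l | j ≤ i} := by
  have hparity : ∀ k ≤ l.length, ((false :: l).getD k false = true ↔
      Odd #{j ∈ range k | (false :: l).getD j false ≠ l.getD j false}) := by
    intro k hk
    induction k with
    | zero => simp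
    | succ k ih =>
      rw [List.getD_cons_succ, range_add_one, filter_insert]
      have ih := ih (by omega)
      split_ifs with hflip
      · rw [card_insert_of_notMem (by simp), Nat.odd_add_one, ← ih]
        revert hflip
        cases (false :: l).getD k false <;> cases l.getD k false <;> simp
      · rw [← ih, not_not.1 hflip]
  have hprefix : {j ∈ flips false l | j ≤ i} =
      {j ∈ range (i + 1) | (false :: l).getD j false ≠ l.getD j false} := by
    ext j
    simp only [flips, mem_filter, mem_range]
    constructor
    · rintro ⟨⟨-, hflip⟩, hj⟩
      exact ⟨by omega, hflip⟩
    · rintro ⟨hj, hflip⟩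
      exact ⟨⟨by omega, hflip⟩, by omega⟩
  rw [hprefix, ← hparity (i + 1) hi, List.getD_cons_succ]

end FlipPositions

section LowCrossingOrder

variable {α ι : Type*} [DecidableEq α] {N : ι → Finset α}

/-- The membership word of `a` in the sets `N x`, where `x` runs through the list `L`. -/
def membershipWord (N : ι → Finset α) (L : List ι) (a : α) : List Bool :=
  L.map fun x ↦ decide (a ∈ N x)

theorem two_pow_card_flips_insert_le (y x : ι) (L₁ L₂ : List ι) (a : α) :
    2 ^ #(flips false (membershipWord N (L₁ ++ y :: x :: L₂) a)) ≤
      (if a ∈ N x ∆ N y then (4 : ℝ) else 1) *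
        2 ^ #(flips false (membershipWord N (L₁ ++ y :: L₂) a)) := by
  have hflips := card_flips_insert_le (decide (a ∈ N y)) (decide (a ∈ N x))
    (membershipWord N L₁ a) (membershipWord N L₂ a) false
  have hsymm : a ∈ N x ∆ N y ↔ decide (a ∈ N x) ≠ decide (a ∈ N y) := by
    rw [mem_symmDiff, ne_eq, decide_eq_decide]
    tauto
  simp only [membershipWord, List.map_append, List.map_cons, hsymm] at hflips ⊢
  refine (pow_le_pow_right₀ one_le_two hflips).trans_eq ?_
  by_cases h : decide (a ∈ N x) = decide (a ∈ N y)
  · rw [if_pos h, if_neg (not_not.2 h), mul_zero, add_zero, one_mul]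
  · rw [if_neg h, if_pos h, mul_one, pow_add, mul_comm]
    norm_num

variable [Fintype α]

theorem sum_mul_ite_mem_four_one_le {w : α → ℝ} (hw : ∀ a, 0 ≤ w a) {D : Finset α} {ρ : ℝ}
    (hD : ∑ a ∈ D, w a ≤ ρ * ∑ a, w a) :
    ∑ a, w a * (if a ∈ D then 4 else 1) ≤ (∑ a, w a) * Real.exp (3 * ρ) :=
  calc ∑ a, w a * (if a ∈ D then 4 else 1) = ∑ a, w a + 3 * ∑ a ∈ D, w a := by
        rw [← univ_inter D, ← sum_ite_mem, mul_sum, ← sum_add_distrib]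
        refine sum_congr rfl fun a _ ↦ ?_
        simp only [univ_inter]
        split_ifs <;> ring
    _ ≤ (∑ a, w a) * (3 * ρ + 1) := by linarith
    _ ≤ (∑ a, w a) * Real.exp (3 * ρ) :=
        mul_le_mul_of_nonneg_left (Real.add_one_le_exp _) (sum_nonneg fun a _ ↦ hw a)

variable [DecidableEq ι]

theorem exists_eq_append_cons_of_toFinset_eq_erase {L : List ι} {S : Finset ι} {x y : ι}
    (hL : L.Nodup) (hLS : L.toFinset = S.erase x) (hx : x ∈ S) (hy : y ∈ S.erase x) :
    ∃ L₁ L₂, L = L₁ ++ y :: L₂ ∧ (L₁ ++ y :: x :: L₂).Nodup ∧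
      (L₁ ++ y :: x :: L₂).toFinset = S := by
  have hxL : x ∉ L := by
    rw [← List.mem_toFinset, hLS]
    exact notMem_erase x S
  rw [← hLS, List.mem_toFinset] at hy
  obtain ⟨L₁, L₂, rfl⟩ := List.append_of_mem hy
  have hperm : (L₁ ++ y :: x :: L₂).Perm (x :: (L₁ ++ y :: L₂)) :=
    (List.Perm.append_left L₁ (List.Perm.swap x y L₂)).trans List.perm_middle
  refine ⟨L₁, L₂, rfl, hperm.nodup_iff.2 (List.nodup_cons.2 ⟨hxL, hL⟩), ?_⟩
  rw [List.toFinset_eq_of_perm _ _ hperm, List.toFinset_cons, hLS, insert_erase hx]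

/-- Welzl's iterative reweighting: remove one element `x` of the light pair `x`, `y`, quadruple the
weight of the points separating the pair, order the rest, and put `x` back right after `y`. -/
theorem exists_list_sum_two_pow_card_flips_le {ρ : ℕ → ℝ}
    (hρ : ∀ S : Finset ι, 2 ≤ #S → ∀ w : α → ℝ, (∀ a, 0 < w a) →
      ∃ x ∈ S, ∃ y ∈ S, x ≠ y ∧ ∑ a ∈ N x ∆ N y, w a ≤ ρ #S * ∑ a, w a)
    {S : Finset ι} (hS : S.Nonempty) {w : α → ℝ} (hw : ∀ a, 0 < w a) :
    ∃ L : List ι, L.Nodup ∧ L.toFinset = S ∧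
      ∑ a, w a * 2 ^ #(flips false (membershipWord N L a)) ≤
        2 * (∑ a, w a) * Real.exp (3 * ∑ k ∈ Icc 2 #S, ρ k) := by
  induction hm : #S, hS.card_pos using Nat.le_induction generalizing S w with
  | base =>
    obtain ⟨x, rfl⟩ := card_eq_one.1 hm
    refine ⟨[x], List.nodup_singleton x, by simp, ?_⟩
    have hone : ∀ a, (2 : ℝ) ^ #(flips false (membershipWord N [x] a)) ≤ 2 := fun a ↦ by
      simp only [membershipWord, List.map_cons, List.map_nil, card_flips_cons, card_flips_nil]
      split_ifs <;> norm_num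
    rw [Icc_eq_empty (by norm_num), sum_empty, mul_zero, Real.exp_zero, mul_one, mul_comm, sum_mul]
    exact sum_le_sum fun a _ ↦ mul_le_mul_of_nonneg_left (hone a) (hw a).le
  | succ m hm1 ih =>
    obtain ⟨x, hx, y, hy, hxy, hpair⟩ := hρ S (by omega) w hw
    rw [hm] at hpair
    set v : α → ℝ := fun a ↦ w a * if a ∈ N x ∆ N y then 4 else 1 with hv
    have hyS : y ∈ S.erase x := mem_erase.2 ⟨hxy.symm, hy⟩
    obtain ⟨L, hL, hLS, hsum⟩ := ih (S := S.erase x) (w := v) ⟨y, hyS⟩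
      (fun a ↦ mul_pos (hw a) (by split_ifs <;> norm_num))
      (by rw [card_erase_of_mem hx]; omega)
    obtain ⟨L₁, L₂, rfl, hnodup, htoFinset⟩ :=
      exists_eq_append_cons_of_toFinset_eq_erase hL hLS hx hyS
    refine ⟨L₁ ++ y :: x :: L₂, hnodup, htoFinset, ?_⟩
    calc ∑ a, w a * 2 ^ #(flips false (membershipWord N (L₁ ++ y :: x :: L₂) a))
        ≤ ∑ a, v a * 2 ^ #(flips false (membershipWord N (L₁ ++ y :: L₂) a)) := by
          refine sum_le_sum fun a _ ↦ ?_
          rw [hv, mul_assoc]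
          exact mul_le_mul_of_nonneg_left (two_pow_card_flips_insert_le y x L₁ L₂ a) (hw a).le
      _ ≤ 2 * (∑ a, v a) * Real.exp (3 * ∑ k ∈ Icc 2 m, ρ k) := hsum
      _ ≤ 2 * ((∑ a, w a) * Real.exp (3 * ρ (m + 1))) *
            Real.exp (3 * ∑ k ∈ Icc 2 m, ρ k) := by
          gcongr
          exact sum_mul_ite_mem_four_one_le (fun a ↦ (hw a).le) hpair
      _ = 2 * (∑ a, w a) * Real.exp (3 * ∑ k ∈ Icc 2 (m + 1), ρ k) := by
          rw [sum_Icc_succ_top (by omega), mul_add, add_comm, Real.exp_add]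
          ring

end LowCrossingOrder

section Asymptotics

theorem sum_one_add_log_mul_rpow_neg_le {θ : ℝ} (hθ : θ ≤ 1) (n : ℕ) :
    ∑ k ∈ Icc 1 n, (1 + Real.log k) * (k : ℝ) ^ (-θ) ≤
      (1 + Real.log n) ^ 2 * (n : ℝ) ^ (1 - θ) := by
  have hterm : ∀ k ∈ Icc 1 n, (1 + Real.log k) * (k : ℝ) ^ (-θ) ≤
      (1 + Real.log n) * (n : ℝ) ^ (1 - θ) * (k : ℝ)⁻¹ := by
    intro k hk
    obtain ⟨hk1, hkn⟩ := mem_Icc.1 hk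
    have hk0 : (0 : ℝ) < k := by exact_mod_cast hk1
    calc (1 + Real.log k) * (k : ℝ) ^ (-θ)
        = (1 + Real.log k) * (k : ℝ) ^ (1 - θ) * (k : ℝ)⁻¹ := by
          rw [mul_assoc, ← Real.rpow_neg_one, ← Real.rpow_add hk0]
          ring_nf
      _ ≤ (1 + Real.log n) * (n : ℝ) ^ (1 - θ) * (k : ℝ)⁻¹ := by gcongr
  calc ∑ k ∈ Icc 1 n, (1 + Real.log k) * (k : ℝ) ^ (-θ)
      ≤ (1 + Real.log n) * (n : ℝ) ^ (1 - θ) * ∑ k ∈ Icc 1 n, (k : ℝ)⁻¹ := by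
        rw [mul_sum]
        exact sum_le_sum hterm
    _ ≤ (1 + Real.log n) * (n : ℝ) ^ (1 - θ) * (1 + Real.log n) := by
        have hharmonic := harmonic_le_one_add_log n
        rw [harmonic_eq_sum_Icc] at hharmonic
        push_cast at hharmonic
        gcongr
    _ = (1 + Real.log n) ^ 2 * (n : ℝ) ^ (1 - θ) := by ring

theorem one_add_log_pow_mul_rpow_le {c γ x : ℝ} (hγ : c < γ) (hx : 1 ≤ x) (k : ℕ) :
    (1 + Real.log x) ^ k * x ^ c ≤ (1 + k / (γ - c)) ^ k * x ^ γ := by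
  rcases Nat.eq_zero_or_pos k with rfl | hk
  · simpa using Real.rpow_le_rpow_of_exponent_le hx hγ.le
  set ε : ℝ := (γ - c) / k with hε
  have hε0 : 0 < ε := div_pos (sub_pos.2 hγ) (by exact_mod_cast hk)
  have hone : 1 ≤ x ^ ε := Real.one_le_rpow hx hε0.le
  have hlog : 1 + Real.log x ≤ (1 + k / (γ - c)) * x ^ ε :=
    calc 1 + Real.log x ≤ x ^ ε + x ^ ε / ε :=
          add_le_add hone (Real.log_le_rpow_div (by linarith) hε0)
      _ = (1 + k / (γ - c)) * x ^ ε := by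
          rw [hε, div_div_eq_mul_div]
          ring
  calc (1 + Real.log x) ^ k * x ^ c ≤ ((1 + k / (γ - c)) * x ^ ε) ^ k * x ^ c := by
        have := Real.log_nonneg hx
        gcongr
    _ = (1 + k / (γ - c)) ^ k * x ^ γ := by
        rw [mul_pow, mul_assoc, ← Real.rpow_mul_natCast (by linarith),
          ← Real.rpow_add (by linarith), hε, div_mul_cancel₀ _ (by positivity), sub_add_cancel]

theorem natLog_two_add_one_le (n : ℕ) :
    ((Nat.log 2 n + 1 : ℕ) : ℝ) ≤ 2 * (1 + Real.log n) := by
  have hlogb : (Nat.log 2 n : ℝ) * Real.log 2 ≤ Real.log n := by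
    rw [← le_div_iff₀ (Real.log_pos one_lt_two)]
    exact Real.natLog_le_logb n 2
  have hhalf : (Nat.log 2 n : ℝ) * (1 / 2) ≤ Nat.log 2 n * Real.log 2 := by
    gcongr
    linarith [Real.log_two_gt_d9]
  push_cast
  linarith

theorem natCast_le_of_two_pow_le {t : ℕ} {x B : ℝ} (hx : 0 < x) (hB : 1 + Real.log x ≤ B)
    (ht : (2 : ℝ) ^ t ≤ 2 * x * Real.exp (6 * B)) : (t : ℝ) ≤ 14 * B := by
  have hlog : t * Real.log 2 ≤ Real.log 2 + Real.log x + 6 * B := by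
    rw [← Real.log_pow, ← Real.log_mul two_ne_zero hx.ne', ← Real.log_exp (6 * B),
      ← Real.log_mul (by positivity) (Real.exp_ne_zero _)]
    exact Real.log_le_log (by positivity) ht
  have hhalf : (t : ℝ) * (1 / 2) ≤ t * Real.log 2 := by
    gcongr
    linarith [Real.log_two_gt_d9]
  linarith [Real.log_two_lt_d9]

end Asymptotics

section ImplicitRepresentation

variable {V : Type*}

/-- The relations in `𝓡` have implicit representations with `m` bits per vertex and a common
symmetric decoder. -/
def ImplicitlyRepresentable (m : ℕ) (𝓡 : Set (V → V → Prop)) : Prop :=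
  ∃ G : (Fin m → Bool) → (Fin m → Bool) → Bool, (∀ a b, G a b = G b a) ∧
    ∀ R ∈ 𝓡, ∃ F : V → (Fin m → Bool), ∀ i j, G (F i) (F j) = true ↔ R i j

theorem implicitlyRepresentable_of_labels {X : Type*} [Fintype X] {m : ℕ}
    (hX : Fintype.card X ≤ 2 ^ m) (D : X → X → Prop) {𝓡 : Set (V → V → Prop)}
    (hsymm : ∀ R ∈ 𝓡, Std.Symm R) (hD : ∀ R ∈ 𝓡, ∃ f : V → X, ∀ i j, D (f i) (f j) ↔ R i j) :
    ImplicitlyRepresentable m 𝓡 := by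
  classical
  obtain ⟨e⟩ : Nonempty (X ↪ (Fin m → Bool)) :=
    Function.Embedding.nonempty_of_card_le (by simpa using hX)
  refine ⟨fun a b ↦ decide (∃ x y, e x = a ∧ e y = b ∧ D x y ∧ D y x), fun a b ↦ ?_, ?_⟩
  · refine decide_eq_decide.2 ⟨?_, ?_⟩ <;>
      exact fun ⟨x, y, hx, hy, hxy, hyx⟩ ↦ ⟨y, x, hy, hx, hyx, hxy⟩
  · intro R hR
    obtain ⟨f, hf⟩ := hD R hR
    refine ⟨e ∘ f, fun i j ↦ ?_⟩
    simpa [hf] using (hsymm R hR).symm i j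

open scoped Classical in
/-- The neighbourhood of `x`: the set cut out of the vertices by the column of `R` at `x`. -/
noncomputable def neighborhood [Fintype V] (R : V → V → Prop) (x : V) : Finset V :=
  {a | R a x}

theorem mem_neighborhood [Fintype V] {R : V → V → Prop} {a x : V} :
    a ∈ neighborhood R x ↔ R a x := by
  simp [neighborhood]

/-- A vertex label: the position of the vertex in a linear order of the vertices, and at most `K`
positions at which its row of the adjacency matrix flips along that order. -/
abbrev FlipLabel (n K : ℕ) : Type :=
  range n × {T ∈ (range n).powerset | #T ≤ K}

/-- Decodes the entry of the adjacency matrix in the row of `a` and the column of `b`. -/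
def FlipLabel.Adj {n K : ℕ} (a b : FlipLabel n K) : Prop :=
  Odd #{t ∈ a.2.1 | t ≤ b.1.1}

theorem card_flipLabel_le (n K : ℕ) :
    Fintype.card (FlipLabel n K) ≤ 2 ^ ((K + 1) * (Nat.log 2 n + 1)) := by
  have hlog : n + 1 ≤ 2 ^ (Nat.log 2 n + 1) := Nat.lt_pow_succ_log_self one_lt_two n
  calc Fintype.card (FlipLabel n K) = n * #{T ∈ (range n).powerset | #T ≤ K} := by
        rw [Fintype.card_prod, Fintype.card_coe, Fintype.card_coe, card_range]
    _ ≤ (n + 1) * (n + 1) ^ K := by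
        gcongr
        · omega
        · simpa using card_filter_powerset_card_le_le_pow (range n) K
    _ = (n + 1) ^ (K + 1) := (pow_succ' _ _).symm
    _ ≤ (2 ^ (Nat.log 2 n + 1)) ^ (K + 1) := by gcongr
    _ = 2 ^ ((K + 1) * (Nat.log 2 n + 1)) := by rw [← pow_mul, mul_comm]

variable [Fintype V]

theorem exists_flipLabel_adj_iff [DecidableEq V] {R : V → V → Prop} {L : List V} {K : ℕ}
    (hL : L.Nodup) (hLV : L.toFinset = univ)
    (hK : ∀ a, #(flips false (membershipWord (neighborhood R) L a)) ≤ K) :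
    ∃ f : V → FlipLabel (Fintype.card V) K, ∀ i j, (f i).Adj (f j) ↔ R i j := by
  have hlen : L.length = Fintype.card V := by
    rw [← List.toFinset_card_of_nodup hL, hLV, card_univ]
  have hidx : ∀ x, L.idxOf x < L.length := fun x ↦
    List.idxOf_lt_length_iff.2 (List.mem_toFinset.1 (hLV ▸ mem_univ x))
  have hflips : ∀ a, flips false (membershipWord (neighborhood R) L a) ∈
      {T ∈ (range (Fintype.card V)).powerset | #T ≤ K} := fun a ↦ by
    refine mem_filter.2 ⟨mem_powerset.2 ?_, hK a⟩
    simpa only [membershipWord, List.length_map, hlen] using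
      flips_subset_range false (membershipWord (neighborhood R) L a)
  refine ⟨fun x ↦ (⟨L.idxOf x, mem_range.2 (hlen ▸ hidx x)⟩, ⟨_, hflips x⟩), fun i j ↦ ?_⟩
  have hword := getD_eq_true_iff_odd_card_flips (l := membershipWord (neighborhood R) L i)
    (i := L.idxOf j) (by simpa only [membershipWord, List.length_map] using hidx j)
  rw [FlipLabel.Adj, ← hword]
  simp [membershipWord, hidx j, mem_neighborhood]

theorem exists_list_card_flips_le [DecidableEq V] [Nonempty V] {N : V → Finset V} {d : ℕ}
    (hd : (univ.image N).vcDim ≤ d) (hd0 : d ≠ 0) :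
    ∃ L : List V, L.Nodup ∧ L.toFinset = univ ∧
      ∀ a, (#(flips false (membershipWord N L a)) : ℝ) ≤
        14 * (1 + Real.log (Fintype.card V)) ^ 2 * (Fintype.card V : ℝ) ^ (1 - 1 / d : ℝ) := by
  set n := Fintype.card V
  set B : ℝ := (1 + Real.log n) ^ 2 * (n : ℝ) ^ (1 - 1 / d : ℝ)
  have hn1 : (1 : ℝ) ≤ n := by exact_mod_cast Fintype.card_pos (α := V)
  have hlog : 0 ≤ Real.log n := Real.log_natCast_nonneg n
  have hd1 : (1 / d : ℝ) ≤ 1 := by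
    rw [div_le_one (by positivity)]
    exact_mod_cast Nat.one_le_iff_ne_zero.2 hd0
  obtain ⟨L, hL, hLV, hsum⟩ := exists_list_sum_two_pow_card_flips_le
    (ρ := fun k ↦ 2 * (1 + Real.log k) * (k : ℝ) ^ (-(1 / d) : ℝ))
    (fun S hS w hw ↦ exists_ne_sum_symmDiff_le
      ((vcDim_mono (image_subset_image (subset_univ S))).trans hd) hd0 hS hw)
    univ_nonempty (w := fun _ ↦ (1 : ℝ)) (fun _ ↦ one_pos)
  have hrate : ∑ k ∈ Icc 2 n, 2 * (1 + Real.log k) * (k : ℝ) ^ (-(1 / d) : ℝ) ≤ 2 * B := by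
    simp only [mul_assoc, ← mul_sum]
    gcongr
    refine le_trans ?_ (sum_one_add_log_mul_rpow_neg_le hd1 n)
    refine sum_le_sum_of_subset_of_nonneg (Icc_subset_Icc_left one_le_two) fun k _ _ ↦ ?_
    positivity
  have hBlog : 1 + Real.log n ≤ B := by
    have hrpow : 1 ≤ (n : ℝ) ^ (1 - 1 / d : ℝ) := Real.one_le_rpow hn1 (by linarith)
    exact (le_self_pow₀ (by linarith) two_ne_zero).trans
      (le_mul_of_one_le_right (by positivity) hrpow)
  refine ⟨L, hL, hLV, fun a ↦ ?_⟩
  rw [mul_assoc]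
  refine natCast_le_of_two_pow_le (by linarith) hBlog ?_
  calc (2 : ℝ) ^ #(flips false (membershipWord N L a))
      ≤ ∑ b, 1 * 2 ^ #(flips false (membershipWord N L b)) := by
        simp only [one_mul]
        exact single_le_sum (f := fun b ↦ (2 : ℝ) ^ #(flips false (membershipWord N L b)))
          (fun _ _ ↦ by positivity) (mem_univ a)
    _ ≤ 2 * n * Real.exp
          (3 * ∑ k ∈ Icc 2 n, 2 * (1 + Real.log k) * (k : ℝ) ^ (-(1 / d) : ℝ)) := by
        simpa using hsum
    _ ≤ 2 * n * Real.exp (6 * B) :=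
        mul_le_mul_of_nonneg_left (Real.exp_le_exp.2 (by linarith)) (by positivity)

theorem exists_implicitlyRepresentable_of_vcDim_le [DecidableEq V] [Nonempty V]
    {𝓡 : Set (V → V → Prop)} {d : ℕ} (hd0 : d ≠ 0) (hsymm : ∀ R ∈ 𝓡, Std.Symm R)
    (hd : ∀ R ∈ 𝓡, (univ.image (neighborhood R)).vcDim ≤ d) :
    ∃ m : ℕ, ImplicitlyRepresentable m 𝓡 ∧ (m : ℝ) ≤
      30 * ((1 + Real.log (Fintype.card V)) ^ 3 * (Fintype.card V : ℝ) ^ (1 - 1 / d : ℝ)) := by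
  set n := Fintype.card V
  set B : ℝ := (1 + Real.log n) ^ 2 * (n : ℝ) ^ (1 - 1 / d : ℝ) with hB
  set K := ⌊14 * B⌋₊
  have hn1 : (1 : ℝ) ≤ n := by exact_mod_cast Fintype.card_pos (α := V)
  have hlog : 0 ≤ Real.log n := Real.log_natCast_nonneg n
  refine ⟨(K + 1) * (Nat.log 2 n + 1),
    implicitlyRepresentable_of_labels (card_flipLabel_le n K) FlipLabel.Adj hsymm ?_, ?_⟩
  · intro R hR
    obtain ⟨L, hL, hLV, hflips⟩ := exists_list_card_flips_le (hd R hR) hd0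
    refine exists_flipLabel_adj_iff hL hLV fun a ↦ Nat.le_floor ?_
    rw [hB, ← mul_assoc]
    exact hflips a
  · have hd1 : (1 / d : ℝ) ≤ 1 := by
      rw [div_le_one (by positivity)]
      exact_mod_cast Nat.one_le_iff_ne_zero.2 hd0
    have hB1 : 1 ≤ B := one_le_mul_of_one_le_of_one_le (one_le_pow₀ (by linarith))
      (Real.one_le_rpow hn1 (by linarith))
    calc (((K + 1) * (Nat.log 2 n + 1) : ℕ) : ℝ)
        = ((K : ℝ) + 1) * ((Nat.log 2 n + 1 : ℕ) : ℝ) := by push_cast; ring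
      _ ≤ (14 * B + B) * (2 * (1 + Real.log n)) := by
          gcongr
          · exact Nat.floor_le (by positivity)
          · exact natLog_two_add_one_le n
      _ = 30 * ((1 + Real.log n) ^ 3 * (n : ℝ) ^ (1 - 1 / d : ℝ)) := by rw [hB]; ring

end ImplicitRepresentation

section BallGraphs

variable {V E : Type*}

/-- The intersection relation of closed balls with centers `p i` and radii `r i`. -/
def BallIntersection [PseudoMetricSpace E] (p : V → E) (r : V → ℝ) (i j : V) : Prop :=
  dist (p i) (p j) ≤ r i + r j

theorem ballIntersection_symm [PseudoMetricSpace E] (p : V → E) (r : V → ℝ) :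
    Std.Symm (BallIntersection p r) :=
  ⟨fun i j h ↦ by rwa [BallIntersection, dist_comm, add_comm]⟩

variable [NormedAddCommGroup E] [InnerProductSpace ℝ E]

/-- The condition `0 ≤ (r i + r j)² - ‖p i - p j‖²` is linear in
`(1, r i, p i, (r i)² - ‖p i‖²)`. -/
theorem vcDim_ballIntersection_le [FiniteDimensional ℝ E] [Fintype V] [DecidableEq V] (p : V → E)
    {r : V → ℝ} (hr : ∀ i, 0 ≤ r i) :
    (univ.image (neighborhood (BallIntersection p r))).vcDim ≤ finrank ℝ E + 3 := by
  let Φ : V → ℝ × ℝ × E × ℝ := fun i ↦ (1, r i, p i, r i ^ 2 - ‖p i‖ ^ 2)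
  have hfinrank : finrank ℝ (ℝ × ℝ × E × ℝ) = finrank ℝ E + 3 := by
    simp only [finrank_prod, finrank_self]
    ring
  rw [← hfinrank]
  refine vcDim_le_finrank_of_halfspaces Φ fun A hA ↦ ?_
  obtain ⟨j, -, rfl⟩ := mem_image.1 hA
  let ℓ : Module.Dual ℝ (ℝ × ℝ × E × ℝ) :=
    (LinearMap.mulLeft ℝ (r j ^ 2 - ‖p j‖ ^ 2)).coprod <|
      (LinearMap.mulLeft ℝ (2 * r j)).coprod <| (innerₗ E ((2 : ℝ) • p j)).coprod LinearMap.id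
  have hℓ : ∀ i, ℓ (Φ i) = (r i + r j) ^ 2 - dist (p i) (p j) ^ 2 := fun i ↦ by
    simp only [ℓ, Φ, LinearMap.coprod_apply, LinearMap.mulLeft_apply, LinearMap.id_apply,
      innerₗ_apply_apply, real_inner_smul_left, dist_eq_norm, norm_sub_sq_real,
      real_inner_comm (p i) (p j)]
    ring
  refine ⟨ℓ, fun i ↦ ?_⟩
  rw [mem_neighborhood, BallIntersection, hℓ, sub_nonneg,
    sq_le_sq₀ dist_nonneg (add_nonneg (hr i) (hr j))]

variable (E) in
theorem unit_disk_implicit_representation_general [FiniteDimensional ℝ E] {γ : ℝ}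
    (hγ : 1 - 1 / (finrank ℝ E + 3) < γ) :
    ∃ C : ℝ, 0 < C ∧ ∀ n : ℕ, 1 ≤ n →
      ∃ m : ℕ, (m : ℝ) ≤ C * (n : ℝ) ^ γ ∧
        ∃ G : (Fin m → Bool) → (Fin m → Bool) → Bool,
          (∀ a b, G a b = G b a) ∧
          ∀ (p : Fin n → E) (r : Fin n → ℝ), (∀ i, 0 ≤ r i) →
            ∃ F : Fin n → (Fin m → Bool),
              ∀ i j : Fin n, G (F i) (F j) = true ↔ dist (p i) (p j) ≤ r i + r j := by
  set c : ℝ := 1 - 1 / (finrank ℝ E + 3)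
  refine ⟨30 * (1 + 3 / (γ - c)) ^ 3, by positivity, fun n hn ↦ ?_⟩
  have : NeZero n := ⟨by omega⟩
  obtain ⟨m, ⟨G, hG, hF⟩, hm⟩ := exists_implicitlyRepresentable_of_vcDim_le
    (𝓡 := {R | ∃ (p : Fin n → E) (r : Fin n → ℝ), (∀ i, 0 ≤ r i) ∧ R = BallIntersection p r})
    (d := finrank ℝ E + 3) (by omega)
    (by rintro _ ⟨p, r, -, rfl⟩; exact ballIntersection_symm p r)
    (by rintro _ ⟨p, r, hr, rfl⟩; exact vcDim_ballIntersection_le p hr)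
  refine ⟨m, ?_, G, hG, fun p r hr ↦ hF _ ⟨p, r, hr, rfl⟩⟩
  have hlog := one_add_log_pow_mul_rpow_le hγ (x := n) (by exact_mod_cast hn) 3
  rw [Fintype.card_fin] at hm
  push_cast at hm hlog
  linarith

theorem four_fifths_lt_logb_two_fifteen_div_four : 4 / 5 < Real.logb 2 15 / 4 := by
  have hlogb : (7 / 2 : ℝ) < Real.logb 2 15 := by
    rw [Real.lt_logb_iff_rpow_lt one_lt_two (by norm_num)]
    refine lt_of_pow_lt_pow_left₀ 2 (by norm_num) ?_
    rw [← Real.rpow_mul_natCast zero_le_two]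
    norm_num
  linarith

end BallGraphs

end

/-- Unit disk graphs (vertices are centers `p_i ∈ ℝ²`, with an edge when
`|p_i − p_j| ≤ 2`) admit implicit representations with `m ≤ C·n^{log₂(15)/4}` bits
per vertex. -/
theorem unit_disk_implicit_representation :
    ∃ C : ℝ, 0 < C ∧ ∀ n : ℕ, 2 ≤ n →
      ∃ m : ℕ, (m : ℝ) ≤ C * (n : ℝ) ^ (Real.logb 2 15 / 4) ∧
        ∃ G : (Fin m → Bool) → (Fin m → Bool) → Bool,
          (∀ a b, G a b = G b a) ∧
          ∀ p : Fin n → EuclideanSpace ℝ (Fin 2),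
            ∃ F : Fin n → (Fin m → Bool),
              ∀ i j : Fin n, i ≠ j →
                (G (F i) (F j) = true ↔ dist (p i) (p j) ≤ 2) := by
  obtain ⟨C, hC, h⟩ := unit_disk_implicit_representation_general (EuclideanSpace ℝ (Fin 2))
    (γ := Real.logb 2 15 / 4)
    (by rw [finrank_euclideanSpace_fin]; linarith [four_fifths_lt_logb_two_fifteen_div_four])
  refine ⟨C, hC, fun n hn ↦ ?_⟩
  obtain ⟨m, hm, G, hG, hF⟩ := h n (by omega)
  refine ⟨m, hm, G, hG, fun p ↦ ?_⟩
  obtain ⟨F, hF⟩ := hF p (fun _ ↦ 1) (fun _ ↦ zero_le_one)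
  exact ⟨F, fun i j _ ↦ by rw [hF, one_add_one_eq_two]⟩
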